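/- Let 𝒜 = (A_1,…,A_m) be an m-tuple of n×n complex matrices. Then 𝒜 is scalable (for every ε > 0 there exist g,h ∈ GL(n,ℂ) with ‖T_{gᴴ𝒜h}(I) − I‖₂² + ‖T*_{gᴴ𝒜h}(I) − I‖₂² < ε², where ‖·‖₂ is the Frobenius norm) if and only if dim 𝒜U ≥ dim U for every complex linear subspace U ≤ ℂ^n. (By the Fortin–Reutenauer formula, the subspace condition is equivalent to nc-rank(A_1x_1+⋯+A_mx_m) = n.) -/

import Mathlib

noncomputable section
open scoped Classical
open Matrix
open scoped ComplexOrder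

/-- The completely positive operator `T_𝒜(X) = ∑ k, A k * X * (A k)ᴴ`. -/
def Tcp {m n : ℕ} (A : Fin m → Matrix (Fin n) (Fin n) ℂ)
    (X : Matrix (Fin n) (Fin n) ℂ) : Matrix (Fin n) (Fin n) ℂ :=
  ∑ k, A k * X * (A k)ᴴ

/-- The dual operator `T*_𝒜(X) = ∑ k, (A k)ᴴ * X * A k`. -/
def TcpStar {m n : ℕ} (A : Fin m → Matrix (Fin n) (Fin n) ℂ)
    (X : Matrix (Fin n) (Fin n) ℂ) : Matrix (Fin n) (Fin n) ℂ :=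
  ∑ k, (A k)ᴴ * X * A k

/-- Squared Frobenius norm of a complex matrix. -/
def frobSq {n : ℕ} (X : Matrix (Fin n) (Fin n) ℂ) : ℝ :=
  ∑ i, ∑ j, ‖X i j‖ ^ 2

/-- `𝒜U = ∑ k, A_k U`. -/
def ASpan {m : ℕ} {ι : Type*} [Fintype ι] [DecidableEq ι]
    (A : Fin m → Matrix ι ι ℂ) (U : Submodule ℂ (ι → ℂ)) : Submodule ℂ (ι → ℂ) :=
  ⨆ k, U.map (A k).mulVecLin

/-!
If `T_ℬ(I)` and `T*_ℬ(I)` are within `ε` of `I`, then `∑ₖ ‖Bₖ v‖²` summed over an orthonormal basis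
of `U` is at least `(1 - ε) dim U`, and at most the sum of `∑ₖ ‖Bₖᴴ w‖²` over an orthonormal basis
of `ℬU`, hence at most `(1 + ε) dim ℬU`. For `ε` small against `1 / n` integrality of the dimension
gives `dim U ≤ dim ℬU`, and this condition is invariant under scaling.

Conversely, on coordinate subspaces the dimension condition is Hall's condition for the matrix of
the numbers `∑ₖ |(Aₖ)ᵢⱼ|²`, whose permanent is therefore positive in every pair of orthonormal
bases, and bounded below by compactness of the unitary group. Hence the capacity
`inf (tr (P T_𝒜(Q)))ⁿ / (det P det Q)` over positive definite `P`, `Q` is positive. Scaling a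
near-minimiser to `P = Q = I` makes `T(I)` and `T*(I)` matrices of trace `n` and determinant close
to `1`, and the stability of the AM-GM inequality puts their eigenvalues close to `1`.
-/

section RealInequalities

-- Square `√x ≤ exp (√x - 1)` and use `2 * (√x - 1) = x - 1 - (√x - 1) ^ 2`.
lemma le_exp_sub_one_sub_sq_div {x N : ℝ} (hx : 0 ≤ x) (hxN : x ≤ N) :
    x ≤ Real.exp (x - 1 - (x - 1) ^ 2 / (2 * (N + 1))) := by
  have hsq : √x ^ 2 = x := Real.sq_sqrt hx
  have hgap : (x - 1) ^ 2 / (2 * (N + 1)) ≤ (√x - 1) ^ 2 := by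
    rw [div_le_iff₀ (by linarith)]
    calc (x - 1) ^ 2 = (√x - 1) ^ 2 * (√x + 1) ^ 2 := by
          rw [← mul_pow]
          congr 1
          linear_combination -hsq
      _ ≤ (√x - 1) ^ 2 * (2 * (N + 1)) := by
        gcongr
        linarith [sq_nonneg (√x - 1)]
  calc x = √x ^ 2 := hsq.symm
    _ ≤ Real.exp (√x - 1) ^ 2 := by
      gcongr
      linarith [Real.add_one_le_exp (√x - 1)]
    _ = Real.exp (2 * (√x - 1)) := by rw [← Real.exp_nat_mul]; norm_num
    _ ≤ Real.exp (x - 1 - (x - 1) ^ 2 / (2 * (N + 1))) := by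
      gcongr
      linarith

lemma prod_le_exp_neg_sum_sq_sub_one {ι : Type*} [Fintype ι] {x : ι → ℝ} (hx : ∀ i, 0 ≤ x i)
    (hsum : ∑ i, x i = Fintype.card ι) :
    ∏ i, x i ≤ Real.exp (-(∑ i, (x i - 1) ^ 2) / (2 * (Fintype.card ι + 1))) := by
  have hle (i : ι) : x i ≤ Fintype.card ι :=
    hsum ▸ Finset.single_le_sum (fun j _ => hx j) (Finset.mem_univ i)
  calc ∏ i, x i
      ≤ ∏ i, Real.exp (x i - 1 - (x i - 1) ^ 2 / (2 * (Fintype.card ι + 1))) :=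
        Finset.prod_le_prod (fun i _ => hx i) fun i _ => le_exp_sub_one_sub_sq_div (hx i) (hle i)
    _ = Real.exp (-(∑ i, (x i - 1) ^ 2) / (2 * (Fintype.card ι + 1))) := by
        rw [← Real.exp_sum, Finset.sum_sub_distrib, Finset.sum_sub_distrib, hsum, ← Finset.sum_div]
        simp [neg_div]

end RealInequalities

section Permanent

variable {ι R : Type*} [Fintype ι] [DecidableEq ι]
  [CommSemiring R] [LinearOrder R] [IsStrictOrderedRing R]

lemma permanent_pos_of_forall_card_le {M : Matrix ι ι R} (hM : ∀ i j, 0 ≤ M i j)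
    (hall : ∀ s : Finset ι, s.card ≤ {i | ∃ j ∈ s, 0 < M i j}.ncard) :
    0 < M.permanent := by
  obtain ⟨f, hf_inj, hf_pos⟩ :=
    (Fintype.all_card_le_filter_rel_iff_exists_injective fun j i => 0 < M i j).1
      fun s => (hall s).trans_eq (by rw [← Set.ncard_coe_finset]; simp)
  refine Finset.sum_pos' (fun σ _ => Finset.prod_nonneg fun j _ => hM _ _)
    ⟨Equiv.ofBijective f (Finite.injective_iff_bijective.1 hf_inj), Finset.mem_univ _, ?_⟩
  exact Finset.prod_pos fun j _ => hf_pos j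

lemma permanent_le_prod_sum {M : Matrix ι ι R} (hM : ∀ i j, 0 ≤ M i j) :
    M.permanent ≤ ∏ j, ∑ i, M i j := by
  rw [Finset.prod_univ_sum, Fintype.piFinset_univ, Matrix.permanent,
    ← Finset.sum_image (f := fun p : ι → ι => ∏ j, M (p j) j) DFunLike.coe_injective.injOn]
  exact Finset.sum_le_sum_of_subset_of_nonneg (Finset.subset_univ _)
    fun p _ _ => Finset.prod_nonneg fun j _ => hM _ _

lemma permanent_le_sum_pow_card {M : Matrix ι ι R} (hM : ∀ i j, 0 ≤ M i j) :
    M.permanent ≤ (∑ i, ∑ j, M i j) ^ Fintype.card ι := by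
  calc M.permanent ≤ ∏ j, ∑ i, M i j := permanent_le_prod_sum hM
    _ ≤ ∏ _j : ι, ∑ i, ∑ j, M i j := by
        refine Finset.prod_le_prod (fun j _ => Finset.sum_nonneg fun i _ => hM i j) fun j _ => ?_
        exact Finset.sum_le_sum fun i _ =>
          Finset.single_le_sum (fun j _ => hM i j) (Finset.mem_univ j)
    _ = (∑ i, ∑ j, M i j) ^ Fintype.card ι := by simp

end Permanent

section PermanentScaling

variable {ι R : Type*} [Fintype ι] [DecidableEq ι] [CommSemiring R]

lemma permanent_diagonal_mul_mul_diagonal (d e : ι → R) (M : Matrix ι ι R) :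
    (diagonal d * M * diagonal e).permanent = (∏ i, d i) * (∏ i, e i) * M.permanent := by
  simp only [Matrix.permanent, mul_diagonal, diagonal_mul, Finset.prod_mul_distrib, Finset.mul_sum]
  exact Finset.sum_congr rfl fun σ _ => by rw [Equiv.prod_comp σ d]; ring

end PermanentScaling

section PositiveMatrices

variable {ι 𝕜 : Type*} [Fintype ι] [DecidableEq ι] [RCLike 𝕜]

lemma isCompact_unitaryGroup : IsCompact (Matrix.unitaryGroup ι 𝕜 : Set (Matrix ι ι 𝕜)) := by
  have hbox : IsCompact (Set.pi Set.univ fun _ : ι => Set.pi Set.univ fun _ : ι =>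
      Metric.closedBall (0 : 𝕜) 1) :=
    isCompact_univ_pi fun _ => isCompact_univ_pi fun _ => isCompact_closedBall _ _
  have hclosed : IsClosed (Matrix.unitaryGroup ι 𝕜 : Set (Matrix ι ι 𝕜)) := isClosed_unitary
  refine hbox.of_isClosed_subset hclosed fun U hU i _ j _ => ?_
  simpa using entry_norm_bound_of_unitary hU i j

lemma isHermitian_eq_unitary_mul_diagonal_mul {M : Matrix ι ι 𝕜} (hM : M.IsHermitian) :
    M = hM.eigenvectorUnitary * diagonal (fun i => (hM.eigenvalues i : 𝕜)) *
      (hM.eigenvectorUnitary : Matrix ι ι 𝕜)ᴴ := by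
  conv_lhs => rw [hM.spectral_theorem, Unitary.conjStarAlgAut_apply]
  rfl

lemma norm_det_eq_prod_eigenvalues {M : Matrix ι ι 𝕜} (hM : M.PosSemidef) :
    ‖M.det‖ = ∏ i, hM.1.eigenvalues i := by
  rw [hM.1.det_eq_prod_eigenvalues, norm_prod]
  exact Finset.prod_congr rfl fun i _ => RCLike.norm_of_nonneg (hM.eigenvalues_nonneg i)

open scoped MatrixOrder in
lemma posDef_exists_eq_mul_conjTranspose {P : Matrix ι ι 𝕜} (hP : P.PosDef) :
    ∃ g : GL ι 𝕜, P = g * (g : Matrix ι ι 𝕜)ᴴ := by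
  have hunit : IsUnit (CFC.sqrt P) := hP.isStrictlyPositive.isUnit_cfcSqrt
  refine ⟨hunit.unit, ?_⟩
  rw [IsUnit.unit_spec, (CFC.sqrt_nonneg P).posSemidef.isHermitian.eq,
    CFC.sqrt_mul_sqrt_self P hP.posSemidef.nonneg]

end PositiveMatrices

section TraceBounds

variable {ι 𝕜 : Type*} [Fintype ι] [RCLike 𝕜]

open scoped MatrixOrder in
lemma re_trace_mul_nonneg_of_posSemidef {P M : Matrix ι ι 𝕜} (hP : P.PosSemidef)
    (hM : M.PosSemidef) : 0 ≤ RCLike.re (P * M).trace := by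
  obtain ⟨g, rfl⟩ := CStarAlgebra.nonneg_iff_eq_star_mul_self.1 hP.nonneg
  rw [mul_assoc, Matrix.trace_mul_comm]
  exact (RCLike.nonneg_iff.1 (hM.mul_mul_conjTranspose_same g).trace_nonneg).1

variable [DecidableEq ι]

lemma re_trace_inv_mul_le_card {M N : Matrix ι ι 𝕜} (hN : N.PosDef) (hMN : (N - M).PosSemidef) :
    RCLike.re (N⁻¹ * M).trace ≤ Fintype.card ι := by
  have hgap := re_trace_mul_nonneg_of_posSemidef hN.inv.posSemidef hMN
  rw [mul_sub, nonsing_inv_mul _ ((isUnit_iff_isUnit_det _).1 hN.isUnit), trace_sub, trace_one,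
    map_sub, RCLike.natCast_re] at hgap
  linarith

lemma le_card_pow_mul_norm_det_of_le {M N : Matrix ι ι 𝕜} (hM : M.PosSemidef) (hN : N.PosDef)
    (hMN : (N - M).PosSemidef) {K : ℝ}
    (hK : ∀ P : Matrix ι ι 𝕜, P.PosDef →
      K * ‖P.det‖ ≤ RCLike.re (P * M).trace ^ Fintype.card ι) :
    K ≤ (Fintype.card ι : ℝ) ^ Fintype.card ι * ‖N.det‖ := by
  have hK_inv : K * ‖N.det‖⁻¹ ≤ (Fintype.card ι : ℝ) ^ Fintype.card ι := by
    calc K * ‖N.det‖⁻¹ = K * ‖N⁻¹.det‖ := by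
          rw [det_nonsing_inv, Ring.inverse_eq_inv', norm_inv]
      _ ≤ RCLike.re (N⁻¹ * M).trace ^ Fintype.card ι := hK _ hN.inv
      _ ≤ (Fintype.card ι : ℝ) ^ Fintype.card ι :=
          pow_le_pow_left₀ (re_trace_mul_nonneg_of_posSemidef hN.inv.posSemidef hM)
            (re_trace_inv_mul_le_card hN hMN) _
  rwa [← div_eq_mul_inv, div_le_iff₀ (norm_pos_iff.2 hN.det_pos.ne')] at hK_inv

-- For invertible `M` take `P = M⁻¹`; the general case is the limit of `M + η • 1` as `η → 0`.
lemma le_card_pow_mul_norm_det {M : Matrix ι ι 𝕜} (hM : M.PosSemidef) {K : ℝ}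
    (hK : ∀ P : Matrix ι ι 𝕜, P.PosDef →
      K * ‖P.det‖ ≤ RCLike.re (P * M).trace ^ Fintype.card ι) :
    K ≤ (Fintype.card ι : ℝ) ^ Fintype.card ι * ‖M.det‖ := by
  have hpert (η : ℝ) (hη : 0 < η) :
      K ≤ (Fintype.card ι : ℝ) ^ Fintype.card ι * ‖(M + (η : 𝕜) • 1).det‖ := by
    have hη_one : ((η : 𝕜) • (1 : Matrix ι ι 𝕜)).PosDef :=
      PosDef.one.smul (RCLike.ofReal_pos.2 hη)
    refine le_card_pow_mul_norm_det_of_le hM (PosDef.posSemidef_add hM hη_one) ?_ hK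
    rw [add_sub_cancel_left]
    exact hη_one.posSemidef
  have hcont : Continuous fun η : ℝ =>
      (Fintype.card ι : ℝ) ^ Fintype.card ι * ‖(M + (η : 𝕜) • 1).det‖ := by
    fun_prop
  have hlim := (hcont.tendsto 0).mono_left (nhdsWithin_le_nhds (s := Set.Ioi 0))
  simp only [RCLike.ofReal_zero, zero_smul, add_zero] at hlim
  exact ge_of_tendsto hlim (Filter.eventually_of_mem self_mem_nhdsWithin hpert)

end TraceBounds

section Frobenius

variable {n : ℕ}

lemma frobSq_nonneg (X : Matrix (Fin n) (Fin n) ℂ) : 0 ≤ frobSq X := by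
  unfold frobSq
  positivity

lemma frobSq_eq_re_trace_mul_conjTranspose (X : Matrix (Fin n) (Fin n) ℂ) :
    frobSq X = (X * Xᴴ).trace.re := by
  simp [frobSq, trace, mul_apply, Complex.mul_conj', ← Complex.ofReal_pow]

lemma frobSq_unitary_mul_mul_conjTranspose {U : Matrix (Fin n) (Fin n) ℂ}
    (hU : U ∈ unitaryGroup (Fin n) ℂ) (X : Matrix (Fin n) (Fin n) ℂ) :
    frobSq (U * X * Uᴴ) = frobSq X := by
  have hUU : Uᴴ * U = 1 := mem_unitaryGroup_iff'.1 hU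
  have hprod : U * X * Uᴴ * (U * X * Uᴴ)ᴴ = U * (X * (Uᴴ * U) * Xᴴ * Uᴴ) := by
    simp only [conjTranspose_mul, conjTranspose_conjTranspose, mul_assoc]
  rw [frobSq_eq_re_trace_mul_conjTranspose, hprod, trace_mul_comm, mul_assoc, hUU, mul_one,
    mul_one, frobSq_eq_re_trace_mul_conjTranspose]

lemma frobSq_diagonal (d : Fin n → ℂ) : frobSq (diagonal d) = ∑ i, ‖d i‖ ^ 2 := by
  simp [frobSq, diagonal_apply, apply_ite]

lemma frobSq_sub_one_eq_sum_eigenvalues {M : Matrix (Fin n) (Fin n) ℂ} (hM : M.IsHermitian) :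
    frobSq (M - 1) = ∑ i, (hM.eigenvalues i - 1) ^ 2 := by
  have hU := hM.eigenvectorUnitary.2
  have hdiag : M - 1 = hM.eigenvectorUnitary *
      diagonal (fun i => ((hM.eigenvalues i - 1 : ℝ) : ℂ)) *
        (hM.eigenvectorUnitary : Matrix (Fin n) (Fin n) ℂ)ᴴ := by
    have hshift : diagonal (fun i => ((hM.eigenvalues i - 1 : ℝ) : ℂ)) =
        diagonal (fun i => (hM.eigenvalues i : ℂ)) - 1 := by
      rw [← diagonal_one, diagonal_sub]
      simp
    rw [hshift, mul_sub, sub_mul, mul_one, ← star_eq_conjTranspose, mem_unitaryGroup_iff.1 hU]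
    exact congrArg (· - 1) (isHermitian_eq_unitary_mul_diagonal_mul hM)
  rw [hdiag, frobSq_unitary_mul_mul_conjTranspose hU, frobSq_diagonal]
  simp only [Complex.norm_real, Real.norm_eq_abs, sq_abs]

lemma norm_det_le_exp_neg_frobSq_sub_one {M : Matrix (Fin n) (Fin n) ℂ} (hM : M.PosSemidef)
    (htrace : M.trace.re = n) :
    ‖M.det‖ ≤ Real.exp (-frobSq (M - 1) / (2 * (n + 1))) := by
  have hsum : ∑ i, hM.1.eigenvalues i = Fintype.card (Fin n) := by
    simpa [hM.1.trace_eq_sum_eigenvalues] using htrace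
  rw [norm_det_eq_prod_eigenvalues hM, frobSq_sub_one_eq_sum_eigenvalues hM.1]
  simpa using prod_le_exp_neg_sum_sq_sub_one hM.eigenvalues_nonneg hsum

end Frobenius

/-- The scaled tuple `gᴴ A h`, with `g` and `h` arbitrary matrices, invertible or not. -/
def scaledTuple {m : ℕ} {ι : Type*} [Fintype ι] (A : Fin m → Matrix ι ι ℂ) (g h : Matrix ι ι ℂ) :
    Fin m → Matrix ι ι ℂ :=
  fun k => gᴴ * A k * h

section SqNormMatrix

variable {m : ℕ} {ι : Type*}

/-- The entrywise sum of squared absolute values of a tuple of matrices; its permanent bounds the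
capacity from below. -/
def sqNormMatrix (A : Fin m → Matrix ι ι ℂ) : Matrix ι ι ℝ :=
  of fun i j => ∑ k, ‖A k i j‖ ^ 2

lemma sqNormMatrix_nonneg (A : Fin m → Matrix ι ι ℂ) (i j : ι) : 0 ≤ sqNormMatrix A i j := by
  simp only [sqNormMatrix, of_apply]
  positivity

lemma sqNormMatrix_pos_of_ne_zero {A : Fin m → Matrix ι ι ℂ} {k : Fin m} {i j : ι}
    (hne : A k i j ≠ 0) : 0 < sqNormMatrix A i j :=
  Finset.sum_pos' (fun _ _ => by positivity) ⟨k, Finset.mem_univ k, by positivity⟩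

end SqNormMatrix

lemma finrank_span_basis_image {κ K V : Type*} [Field K] [AddCommGroup V] [Module K V]
    (b : Module.Basis κ K V) (s : Set κ) :
    Module.finrank K (Submodule.span K (b '' s)) = s.ncard := by
  rw [Module.finrank, rank_span_set ((b.linearIndependent.linearIndepOn s).id_image)]
  exact Set.ncard_image_of_injective s b.injective

section DimNondecreasing

variable {m : ℕ} {ι : Type*} [Fintype ι] [DecidableEq ι]

/-- The tuple `A` does not decrease dimensions: `dim U ≤ dim (A U)` for every subspace `U`. -/
def DimNondecreasing (A : Fin m → Matrix ι ι ℂ) : Prop :=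
  ∀ U : Submodule ℂ (ι → ℂ), Module.finrank ℂ U ≤ Module.finrank ℂ (ASpan A U)

lemma ASpan_scaledTuple (A : Fin m → Matrix ι ι ℂ) (g h : Matrix ι ι ℂ)
    (U : Submodule ℂ (ι → ℂ)) :
    ASpan (scaledTuple A g h) U = (ASpan A (U.map h.mulVecLin)).map gᴴ.mulVecLin := by
  simp only [ASpan, scaledTuple, Submodule.map_iSup, ← Submodule.map_comp, ← mulVecLin_mul,
    mul_assoc]

lemma dimNondecreasing_scaledTuple_iff {A : Fin m → Matrix ι ι ℂ} {g h : Matrix ι ι ℂ}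
    (hg : IsUnit g) (hh : IsUnit h) :
    DimNondecreasing (scaledTuple A g h) ↔ DimNondecreasing A := by
  have finrank_map {f : Matrix ι ι ℂ} (hf : IsUnit f) (U : Submodule ℂ (ι → ℂ)) :
      Module.finrank ℂ (U.map f.mulVecLin) = Module.finrank ℂ U :=
    (Submodule.equivMapOfInjective _ (mulVec_injective_of_isUnit hf) U).finrank_eq.symm
  have map_surjective : Function.Surjective (Submodule.map h.mulVecLin) :=
    Submodule.map_surjective_of_surjective (mulVec_surjective_iff_isUnit.2 hh)
  have finrank_ASpan (U : Submodule ℂ (ι → ℂ)) :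
      Module.finrank ℂ (ASpan (scaledTuple A g h) U) =
        Module.finrank ℂ (ASpan A (U.map h.mulVecLin)) := by
    rw [ASpan_scaledTuple, finrank_map (f := gᴴ) hg.star]
  conv_rhs => rw [DimNondecreasing, map_surjective.forall]
  simp only [DimNondecreasing, finrank_ASpan, finrank_map hh]

lemma ASpan_span_basisFun_le (A : Fin m → Matrix ι ι ℂ) (s : Set ι) :
    ASpan A (Submodule.span ℂ (Pi.basisFun ℂ ι '' s)) ≤
      Submodule.span ℂ (Pi.basisFun ℂ ι '' {i | ∃ j ∈ s, 0 < sqNormMatrix A i j}) := by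
  refine iSup_le fun k => ?_
  rw [Submodule.map_span, Submodule.span_le]
  rintro _ ⟨_, ⟨j, hj, rfl⟩, rfl⟩
  rw [SetLike.mem_coe, Module.Basis.mem_span_image]
  intro i hi
  refine ⟨j, hj, sqNormMatrix_pos_of_ne_zero (k := k) ?_⟩
  simpa using hi

-- Coordinate subspaces turn the dimension condition into Hall's marriage condition.
lemma permanent_sqNormMatrix_pos {A : Fin m → Matrix ι ι ℂ} (hA : DimNondecreasing A) :
    0 < (sqNormMatrix A).permanent := by
  refine permanent_pos_of_forall_card_le (sqNormMatrix_nonneg A) fun s => ?_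
  calc s.card = Module.finrank ℂ (Submodule.span ℂ (Pi.basisFun ℂ ι '' s)) := by
        rw [finrank_span_basis_image, Set.ncard_coe_finset]
    _ ≤ Module.finrank ℂ (ASpan A (Submodule.span ℂ (Pi.basisFun ℂ ι '' s))) := hA _
    _ ≤ Module.finrank ℂ (Submodule.span ℂ
          (Pi.basisFun ℂ ι '' {i | ∃ j ∈ (s : Set ι), 0 < sqNormMatrix A i j})) :=
        Submodule.finrank_mono (ASpan_span_basisFun_le A s)
    _ = {i | ∃ j ∈ s, 0 < sqNormMatrix A i j}.ncard := finrank_span_basis_image _ _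

lemma exists_pos_le_permanent_sqNormMatrix_unitary {A : Fin m → Matrix ι ι ℂ}
    (hA : DimNondecreasing A) :
    ∃ c > 0, ∀ U ∈ unitaryGroup ι ℂ, ∀ V ∈ unitaryGroup ι ℂ,
      c ≤ (sqNormMatrix (scaledTuple A U V)).permanent := by
  have hpos (p : Matrix ι ι ℂ × Matrix ι ι ℂ)
      (hp : p ∈ (unitaryGroup ι ℂ : Set (Matrix ι ι ℂ)) ×ˢ (unitaryGroup ι ℂ : Set _)) :
      0 < (sqNormMatrix (scaledTuple A p.1 p.2)).permanent :=
    permanent_sqNormMatrix_pos ((dimNondecreasing_scaledTuple_iff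
      (Unitary.isUnit_coe (U := ⟨p.1, hp.1⟩)) (Unitary.isUnit_coe (U := ⟨p.2, hp.2⟩))).2 hA)
  have hcont : Continuous fun p : Matrix ι ι ℂ × Matrix ι ι ℂ =>
      (sqNormMatrix (scaledTuple A p.1 p.2)).permanent := by
    have (k : Fin m) (i j : ι) : Continuous fun p : Matrix ι ι ℂ × Matrix ι ι ℂ =>
        (p.1ᴴ * A k * p.2) i j := Continuous.matrix_elem (by fun_prop) i j
    simp only [Matrix.permanent, sqNormMatrix, scaledTuple, of_apply]
    fun_prop
  obtain ⟨c, hc, hle⟩ := (isCompact_unitaryGroup.prod isCompact_unitaryGroup).exists_forall_le'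
    hcont.continuousOn hpos
  exact ⟨c, hc, fun U hU V hV => hle (U, V) ⟨hU, hV⟩⟩

end DimNondecreasing

section CompletelyPositive

variable {m n : ℕ} (A : Fin m → Matrix (Fin n) (Fin n) ℂ)

lemma TcpStar_eq_Tcp_conjTranspose (X : Matrix (Fin n) (Fin n) ℂ) :
    TcpStar A X = Tcp (fun k => (A k)ᴴ) X := by
  simp [Tcp, TcpStar]

lemma Tcp_posSemidef {Q : Matrix (Fin n) (Fin n) ℂ} (hQ : Q.PosSemidef) : (Tcp A Q).PosSemidef :=
  posSemidef_sum _ fun k _ => hQ.mul_mul_conjTranspose_same (A k)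

/-- The numerator `tr (P T_A(Q))` of the capacity; the real part makes it real-valued without
positivity assumptions on `P` and `Q`. -/
def traceForm (P Q : Matrix (Fin n) (Fin n) ℂ) : ℝ :=
  (P * Tcp A Q).trace.re

lemma traceForm_nonneg {P Q : Matrix (Fin n) (Fin n) ℂ} (hP : P.PosSemidef) (hQ : Q.PosSemidef) :
    0 ≤ traceForm A P Q :=
  re_trace_mul_nonneg_of_posSemidef hP (Tcp_posSemidef A hQ)

lemma traceForm_smul_left (s : ℝ) (P Q : Matrix (Fin n) (Fin n) ℂ) :
    traceForm A ((s : ℂ) • P) Q = s * traceForm A P Q := by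
  simp [traceForm]

lemma traceForm_scaledTuple (g h R S : Matrix (Fin n) (Fin n) ℂ) :
    traceForm (scaledTuple A g h) R S = traceForm A (g * R * gᴴ) (h * S * hᴴ) := by
  simp only [traceForm, Tcp, scaledTuple, Finset.mul_sum, trace_sum]
  refine congrArg Complex.re (Finset.sum_congr rfl fun k _ => ?_)
  rw [mul_assoc g, mul_assoc g, trace_mul_comm g]
  simp only [conjTranspose_mul, conjTranspose_conjTranspose, mul_assoc]

lemma traceForm_conjTranspose (P Q : Matrix (Fin n) (Fin n) ℂ) :
    traceForm (fun k => (A k)ᴴ) P Q = traceForm A Q P := by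
  simp only [traceForm, Tcp, Finset.mul_sum, trace_sum, conjTranspose_conjTranspose]
  refine congrArg Complex.re (Finset.sum_congr rfl fun k _ => ?_)
  rw [mul_assoc, ← mul_assoc P, trace_mul_comm]
  simp only [mul_assoc]

lemma traceForm_diagonal (d e : Fin n → ℝ) :
    traceForm A (diagonal fun i => (d i : ℂ)) (diagonal fun i => (e i : ℂ)) =
      ∑ i, ∑ j, (diagonal d * sqNormMatrix A * diagonal e) i j := by
  have hentry (k : Fin m) (i : Fin n) :
      ((A k * diagonal (fun j => (e j : ℂ)) * (A k)ᴴ) i i) =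
        ((∑ j, ‖A k i j‖ ^ 2 * e j : ℝ) : ℂ) := by
    simp only [mul_apply (N := (A k)ᴴ), mul_diagonal, conjTranspose_apply, RCLike.star_def]
    push_cast
    refine Finset.sum_congr rfl fun j _ => ?_
    rw [← Complex.mul_conj']
    ring
  simp only [traceForm, Tcp, trace, diag_apply, diagonal_mul, mul_diagonal, Matrix.sum_apply,
    hentry, sqNormMatrix, of_apply]
  norm_cast
  simp only [Finset.mul_sum, Finset.sum_mul, mul_assoc]
  exact Finset.sum_congr rfl fun i _ => Finset.sum_comm

variable {A} in
lemma prod_mul_prod_mul_permanent_le_traceForm_pow {d e : Fin n → ℝ} (hd : ∀ i, 0 ≤ d i)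
    (he : ∀ i, 0 ≤ e i) :
    (∏ i, d i) * (∏ i, e i) * (sqNormMatrix A).permanent ≤
      traceForm A (diagonal fun i => (d i : ℂ)) (diagonal fun i => (e i : ℂ)) ^ n := by
  have hnonneg (i j : Fin n) : 0 ≤ (diagonal d * sqNormMatrix A * diagonal e) i j := by
    rw [mul_diagonal, diagonal_mul]
    exact mul_nonneg (mul_nonneg (hd i) (sqNormMatrix_nonneg A i j)) (he j)
  rw [← permanent_diagonal_mul_mul_diagonal, traceForm_diagonal]
  simpa using permanent_le_sum_pow_card hnonneg

end CompletelyPositive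

section Capacity

variable {m n : ℕ} {A : Fin m → Matrix (Fin n) (Fin n) ℂ} {c : ℝ}

/-- `c` is a lower bound for Gurvits' capacity of `A`, the infimum of
`tr (P T_A(Q)) ^ n / (det P * det Q)` over positive definite `P` and `Q`.
Denominators are cleared, and `‖·‖` turns the determinants into real numbers. -/
def CapacityBound (A : Fin m → Matrix (Fin n) (Fin n) ℂ) (c : ℝ) : Prop :=
  ∀ P Q : Matrix (Fin n) (Fin n) ℂ, P.PosDef → Q.PosDef →
    c * (‖P.det‖ * ‖Q.det‖) ≤ traceForm A P Q ^ n

namespace CapacityBound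

lemma mono (hA : CapacityBound A c) {c' : ℝ} (hc : c' ≤ c) : CapacityBound A c' :=
  fun P Q hP hQ => (mul_le_mul_of_nonneg_right hc (by positivity)).trans (hA P Q hP hQ)

lemma conjTranspose (hA : CapacityBound A c) : CapacityBound (fun k => (A k)ᴴ) c := by
  intro P Q hP hQ
  rw [traceForm_conjTranspose, mul_comm ‖P.det‖]
  exact hA Q P hQ hP

lemma scale (hA : CapacityBound A c) (g h : GL (Fin n) ℂ) :
    CapacityBound (scaledTuple A g h)
      (c * (‖(g * (g : Matrix (Fin n) (Fin n) ℂ)ᴴ).det‖ *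
        ‖(h * (h : Matrix (Fin n) (Fin n) ℂ)ᴴ).det‖)) := by
  intro P Q hP hQ
  rw [traceForm_scaledTuple]
  refine le_trans (le_of_eq ?_) (hA _ _
    (hP.mul_mul_conjTranspose_same (vecMul_injective_of_isUnit g.isUnit))
    (hQ.mul_mul_conjTranspose_same (vecMul_injective_of_isUnit h.isUnit)))
  simp only [det_mul, norm_mul]
  ring

lemma le_traceForm_one_pow (hA : CapacityBound A c) : c ≤ traceForm A 1 1 ^ n := by
  simpa using hA 1 1 PosDef.one PosDef.one

lemma exists_not_capacityBound_div (hA : CapacityBound A c) (hc : 0 < c) {p : ℝ} (hp : 0 < p)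
    (hp_lt : p < 1) : ∃ c₁ > 0, CapacityBound A c₁ ∧ ¬ CapacityBound A (c₁ / p) := by
  let S : Set ℝ := {c | CapacityBound A c}
  have hbdd : BddAbove S := ⟨_, fun _ h => h.le_traceForm_one_pow⟩
  have hsup : 0 < sSup S := hc.trans_le (le_csSup hbdd hA)
  obtain ⟨c₁, hc₁, hlt⟩ := exists_lt_of_lt_csSup ⟨c, hA⟩ (mul_lt_of_lt_one_right hsup hp_lt)
  refine ⟨c₁, (mul_pos hsup hp).trans hlt, hc₁, fun h => ?_⟩
  exact (lt_div_iff₀ hp).2 hlt |>.not_ge (le_csSup hbdd h)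

lemma exists_posDef_traceForm_eq [NeZero n] (hA : CapacityBound A c) (hc : 0 < c) {c' : ℝ}
    (hc' : ¬ CapacityBound A c') :
    ∃ P Q : Matrix (Fin n) (Fin n) ℂ, P.PosDef ∧ Q.PosDef ∧ traceForm A P Q = n ∧
      (n : ℝ) ^ n < c' * (‖P.det‖ * ‖Q.det‖) := by
  simp only [CapacityBound, not_forall, not_le] at hc'
  obtain ⟨P, Q, hP, hQ, hlt⟩ := hc'
  have hform : 0 < traceForm A P Q := by
    have hdet : 0 < c * (‖P.det‖ * ‖Q.det‖) :=
      mul_pos hc (mul_pos (norm_pos_iff.2 hP.det_pos.ne') (norm_pos_iff.2 hQ.det_pos.ne'))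
    refine (traceForm_nonneg A hP.posSemidef hQ.posSemidef).lt_of_ne' fun hzero => ?_
    exact hdet.not_ge ((hA P Q hP hQ).trans_eq (by rw [hzero, zero_pow (NeZero.ne n)]))
  have hn : (0 : ℝ) < n := Nat.cast_pos.2 (NeZero.pos n)
  let s : ℝ := n / traceForm A P Q
  have hs : 0 < s := div_pos hn hform
  have hs_mul : s * traceForm A P Q = n := div_mul_cancel₀ _ hform.ne'
  refine ⟨(s : ℂ) • P, Q, hP.smul (Complex.zero_lt_real.2 hs), hQ, ?_, ?_⟩
  · rw [traceForm_smul_left, hs_mul]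
  · calc (n : ℝ) ^ n = s ^ n * traceForm A P Q ^ n := by rw [← mul_pow, hs_mul]
      _ < s ^ n * (c' * (‖P.det‖ * ‖Q.det‖)) := by gcongr
      _ = c' * (‖((s : ℂ) • P).det‖ * ‖Q.det‖) := by
        simp only [det_smul, Fintype.card_fin, norm_mul, norm_pow, Complex.norm_real,
          Real.norm_of_nonneg hs.le]
        ring

lemma exists_scaling_of_posDef (hA : CapacityBound A c) {P Q : Matrix (Fin n) (Fin n) ℂ}
    (hP : P.PosDef) (hQ : Q.PosDef) :
    ∃ g h : GL (Fin n) ℂ,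
      traceForm (scaledTuple A g h) 1 1 = traceForm A P Q ∧
      CapacityBound (scaledTuple A g h)
        (c * (‖P.det‖ * ‖Q.det‖)) := by
  obtain ⟨g, rfl⟩ := posDef_exists_eq_mul_conjTranspose hP
  obtain ⟨h, rfl⟩ := posDef_exists_eq_mul_conjTranspose hQ
  refine ⟨g, h, ?_, hA.scale g h⟩
  rw [traceForm_scaledTuple, mul_one, mul_one]

lemma exists_near_optimal_scaling [NeZero n] (hA : CapacityBound A c) (hc : 0 < c) {p : ℝ}
    (hp : 0 < p) (hp_lt : p < 1) :
    ∃ g h : GL (Fin n) ℂ,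
      traceForm (scaledTuple A g h) 1 1 = n ∧
      CapacityBound (scaledTuple A g h) (p * n ^ n) := by
  obtain ⟨c₁, hc₁_pos, hc₁, hc₁_div⟩ := hA.exists_not_capacityBound_div hc hp hp_lt
  obtain ⟨P, Q, hP, hQ, hform, hlt⟩ := hc₁.exists_posDef_traceForm_eq hc₁_pos hc₁_div
  obtain ⟨g, h, hform', hbound⟩ := hc₁.exists_scaling_of_posDef hP hQ
  refine ⟨g, h, hform'.trans hform, hbound.mono ?_⟩
  rw [div_mul_eq_mul_div, lt_div_iff₀' hp] at hlt
  exact hlt.le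

lemma frobSq_Tcp_one_sub_one_le {δ : ℝ} (hA : CapacityBound A (Real.exp (-δ) * n ^ n))
    (hform : traceForm A 1 1 = n) : frobSq (Tcp A 1 - 1) ≤ 2 * (n + 1) * δ := by
  have hpsd : (Tcp A 1).PosSemidef := Tcp_posSemidef A PosSemidef.one
  have hdet : Real.exp (-δ) * n ^ n ≤ (n : ℝ) ^ n * ‖(Tcp A 1).det‖ := by
    simpa using le_card_pow_mul_norm_det hpsd fun P hP => by
      simpa [traceForm] using hA P 1 hP PosDef.one
  have hn : (0 : ℝ) < (n : ℝ) ^ n := by exact_mod_cast Nat.pow_self_pos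
  have htrace : (Tcp A 1).trace.re = n := by simpa [traceForm] using hform
  have hexp : Real.exp (-δ) ≤ Real.exp (-frobSq (Tcp A 1 - 1) / (2 * (n + 1))) :=
    (le_of_mul_le_mul_left (by linarith) hn).trans
      (norm_det_le_exp_neg_frobSq_sub_one hpsd htrace)
  rw [Real.exp_le_exp, neg_div, neg_le_neg_iff, div_le_iff₀ (by positivity)] at hexp
  linarith

end CapacityBound

theorem exists_pos_capacityBound (hA : DimNondecreasing A) : ∃ c > 0, CapacityBound A c := by
  obtain ⟨c, hc, hperm⟩ := exists_pos_le_permanent_sqNormMatrix_unitary hA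
  refine ⟨c, hc, fun P Q hP hQ => ?_⟩
  let U := hP.1.eigenvectorUnitary
  let V := hQ.1.eigenvectorUnitary
  have hform : traceForm A P Q =
      traceForm (scaledTuple A U V)
        (diagonal fun i => (hP.1.eigenvalues i : ℂ))
        (diagonal fun i => (hQ.1.eigenvalues i : ℂ)) := by
    rw [traceForm_scaledTuple]
    exact congrArg₂ _ (isHermitian_eq_unitary_mul_diagonal_mul hP.1)
      (isHermitian_eq_unitary_mul_diagonal_mul hQ.1)
  rw [hform]
  refine le_trans ?_ (prod_mul_prod_mul_permanent_le_traceForm_pow hP.posSemidef.eigenvalues_nonneg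
    hQ.posSemidef.eigenvalues_nonneg)
  rw [← norm_det_eq_prod_eigenvalues hP.posSemidef, ← norm_det_eq_prod_eigenvalues hQ.posSemidef,
    mul_comm]
  exact mul_le_mul_of_nonneg_left (hperm U U.2 V V.2) (by positivity)

theorem exists_scaling_of_dimNondecreasing (hA : DimNondecreasing A) {ε : ℝ} (hε : 0 < ε) :
    ∃ g h : GL (Fin n) ℂ,
      frobSq (Tcp (scaledTuple A g h) 1 - 1) +
        frobSq (TcpStar (scaledTuple A g h) 1 - 1) < ε := by
  rcases eq_zero_or_neZero n with rfl | _
  · exact ⟨1, 1, by simpa [frobSq] using hε⟩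
  let δ : ℝ := ε / (8 * (n + 1))
  have hδ : 0 < δ := by positivity
  have hδ_mul : 2 * (n + 1) * δ = ε / 4 := by
    simp only [δ]
    field_simp
    norm_num
  obtain ⟨c, hc, hcap⟩ := exists_pos_capacityBound hA
  obtain ⟨g, h, hform, hbound⟩ := hcap.exists_near_optimal_scaling hc (Real.exp_pos (-δ))
    (Real.exp_lt_one_iff.2 (neg_lt_zero.2 hδ))
  refine ⟨g, h, ?_⟩
  have hrow := hbound.frobSq_Tcp_one_sub_one_le hform
  have hcol := hbound.conjTranspose.frobSq_Tcp_one_sub_one_le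
    ((traceForm_conjTranspose _ 1 1).trans hform)
  rw [TcpStar_eq_Tcp_conjTranspose]
  linarith

end Capacity

section AdjointBounds

variable {κ 𝕜 E F : Type*} [Fintype κ] [RCLike 𝕜]
  [NormedAddCommGroup E] [InnerProductSpace 𝕜 E] [FiniteDimensional 𝕜 E]
  [NormedAddCommGroup F] [InnerProductSpace 𝕜 F] [FiniteDimensional 𝕜 F]

lemma sum_norm_sq_le_sum_norm_sq_adjoint {μ : Type*} [Fintype μ] (T : E →ₗ[𝕜] F) {v : κ → E}
    (hv : Orthonormal 𝕜 v) {W : Submodule 𝕜 F} (w : OrthonormalBasis μ 𝕜 W)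
    (hT : ∀ j, T (v j) ∈ W) :
    ∑ j, ‖T (v j)‖ ^ 2 ≤ ∑ i, ‖LinearMap.adjoint T (w i)‖ ^ 2 := by
  calc ∑ j, ‖T (v j)‖ ^ 2 = ∑ j, ∑ i, ‖inner 𝕜 (w i : F) (T (v j))‖ ^ 2 :=
        Finset.sum_congr rfl fun j _ => (w.sum_sq_norm_inner_right ⟨_, hT j⟩).symm
    _ = ∑ i, ∑ j, ‖inner 𝕜 (v j) (LinearMap.adjoint T (w i))‖ ^ 2 := by
        rw [Finset.sum_comm]
        simp only [LinearMap.adjoint_inner_right, norm_inner_symm (w _ : F)]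
    _ ≤ ∑ i, ‖LinearMap.adjoint T (w i)‖ ^ 2 :=
        Finset.sum_le_sum fun i _ => hv.sum_inner_products_le _

lemma finrank_mul_le_finrank_mul (T : κ → E →ₗ[𝕜] F) {U : Submodule 𝕜 E} {W : Submodule 𝕜 F}
    {a b : ℝ} (hUW : ∀ k, U.map (T k) ≤ W)
    (ha : ∀ x ∈ U, a * ‖x‖ ^ 2 ≤ ∑ k, ‖T k x‖ ^ 2)
    (hb : ∀ y ∈ W, ∑ k, ‖LinearMap.adjoint (T k) y‖ ^ 2 ≤ b * ‖y‖ ^ 2) :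
    Module.finrank 𝕜 U * a ≤ Module.finrank 𝕜 W * b := by
  let v := stdOrthonormalBasis 𝕜 U
  let w := stdOrthonormalBasis 𝕜 W
  have hv : Orthonormal 𝕜 fun j => (v j : E) := v.orthonormal.comp_linearIsometry U.subtypeₗᵢ
  have hw : Orthonormal 𝕜 fun i => (w i : F) := w.orthonormal.comp_linearIsometry W.subtypeₗᵢ
  calc Module.finrank 𝕜 U * a = ∑ j, a * ‖(v j : E)‖ ^ 2 := by simp [hv.1]
    _ ≤ ∑ j, ∑ k, ‖T k (v j)‖ ^ 2 := Finset.sum_le_sum fun j _ => ha _ (v j).2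
    _ = ∑ k, ∑ j, ‖T k (v j)‖ ^ 2 := Finset.sum_comm
    _ ≤ ∑ k, ∑ i, ‖LinearMap.adjoint (T k) (w i)‖ ^ 2 :=
        Finset.sum_le_sum fun k _ => sum_norm_sq_le_sum_norm_sq_adjoint (T k) hv w
          fun j => hUW k (Submodule.mem_map_of_mem (v j).2)
    _ = ∑ i, ∑ k, ‖LinearMap.adjoint (T k) (w i)‖ ^ 2 := Finset.sum_comm
    _ ≤ ∑ i, b * ‖(w i : F)‖ ^ 2 := Finset.sum_le_sum fun i _ => hb _ (w i).2
    _ = Module.finrank 𝕜 W * b := by simp [hw.1]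

end AdjointBounds

section NearlyDoublyStochastic

variable {m n : ℕ} {B : Fin m → Matrix (Fin n) (Fin n) ℂ} {ε : ℝ}

lemma norm_sq_toEuclideanLin_le_frobSq_mul (M : Matrix (Fin n) (Fin n) ℂ)
    (x : EuclideanSpace ℂ (Fin n)) :
    ‖toEuclideanLin M x‖ ^ 2 ≤ frobSq M * ‖x‖ ^ 2 := by
  rw [EuclideanSpace.norm_sq_eq, EuclideanSpace.norm_sq_eq, frobSq, Finset.sum_mul]
  refine Finset.sum_le_sum fun i _ => ?_
  calc ‖toEuclideanLin M x i‖ ^ 2 ≤ (∑ j, ‖M i j‖ * ‖x j‖) ^ 2 := by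
        gcongr
        simpa [toLpLin_apply, mulVec, dotProduct] using
          norm_sum_le Finset.univ fun j => M i j * x j
    _ ≤ (∑ j, ‖M i j‖ ^ 2) * ∑ j, ‖x j‖ ^ 2 := Finset.sum_mul_sq_le_sq_mul_sq _ _ _

lemma inner_toEuclideanLin_Tcp_one (B : Fin m → Matrix (Fin n) (Fin n) ℂ)
    (x : EuclideanSpace ℂ (Fin n)) :
    inner ℂ x (toEuclideanLin (Tcp B 1) x) =
      ((∑ k, ‖LinearMap.adjoint (toEuclideanLin (B k)) x‖ ^ 2 : ℝ) : ℂ) := by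
  rw [Tcp, map_sum, LinearMap.sum_apply, inner_sum]
  push_cast
  refine Finset.sum_congr rfl fun k _ => ?_
  rw [mul_one, toLpLin_mul_same, LinearMap.comp_apply, toEuclideanLin_conjTranspose_eq_adjoint,
    ← LinearMap.adjoint_inner_left, inner_self_eq_norm_sq_to_K]
  rfl

lemma abs_sum_norm_sq_adjoint_sub_norm_sq_le (hε : 0 ≤ ε) (hB : frobSq (Tcp B 1 - 1) ≤ ε ^ 2)
    (x : EuclideanSpace ℂ (Fin n)) :
    |∑ k, ‖LinearMap.adjoint (toEuclideanLin (B k)) x‖ ^ 2 - ‖x‖ ^ 2| ≤ ε * ‖x‖ ^ 2 := by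
  have hinner : inner ℂ x (toEuclideanLin (Tcp B 1 - 1) x) =
      ((∑ k, ‖LinearMap.adjoint (toEuclideanLin (B k)) x‖ ^ 2 - ‖x‖ ^ 2 : ℝ) : ℂ) := by
    rw [map_sub, LinearMap.sub_apply, inner_sub_right, inner_toEuclideanLin_Tcp_one, toLpLin_one,
      LinearMap.id_apply, inner_self_eq_norm_sq_to_K]
    push_cast
    rfl
  have hnorm : ‖toEuclideanLin (Tcp B 1 - 1) x‖ ≤ ε * ‖x‖ := by
    refine le_of_sq_le_sq ?_ (by positivity)
    rw [mul_pow]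
    exact (norm_sq_toEuclideanLin_le_frobSq_mul _ x).trans (by gcongr)
  calc |∑ k, ‖LinearMap.adjoint (toEuclideanLin (B k)) x‖ ^ 2 - ‖x‖ ^ 2|
      = ‖inner ℂ x (toEuclideanLin (Tcp B 1 - 1) x)‖ := by
        rw [hinner, Complex.norm_real, Real.norm_eq_abs]
    _ ≤ ‖x‖ * ‖toEuclideanLin (Tcp B 1 - 1) x‖ := norm_inner_le_norm _ _
    _ ≤ ‖x‖ * (ε * ‖x‖) := by gcongr
    _ = ε * ‖x‖ ^ 2 := by ring

lemma finrank_mul_one_sub_le_finrank_ASpan_mul_one_add (hε : 0 ≤ ε)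
    (hrow : frobSq (Tcp B 1 - 1) ≤ ε ^ 2) (hcol : frobSq (TcpStar B 1 - 1) ≤ ε ^ 2)
    (U : Submodule ℂ (Fin n → ℂ)) :
    Module.finrank ℂ U * (1 - ε) ≤ Module.finrank ℂ (ASpan B U) * (1 + ε) := by
  let e := (WithLp.linearEquiv 2 ℂ (Fin n → ℂ)).symm
  have hmaps (k : Fin m) : (U.map e.toLinearMap).map (toEuclideanLin (B k)) ≤
      (ASpan B U).map e.toLinearMap := by
    rintro _ ⟨_, ⟨x, hx, rfl⟩, rfl⟩
    exact ⟨B k *ᵥ x, (le_iSup (fun k => U.map (B k).mulVecLin) k) ⟨x, hx, rfl⟩, rfl⟩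
  rw [TcpStar_eq_Tcp_conjTranspose] at hcol
  rw [← LinearEquiv.finrank_map_eq e U, ← LinearEquiv.finrank_map_eq e (ASpan B U)]
  refine finrank_mul_le_finrank_mul (fun k => toEuclideanLin (B k)) hmaps
    (fun x _ => ?_) fun y _ => ?_
  · have hx := abs_le.1 (abs_sum_norm_sq_adjoint_sub_norm_sq_le hε hcol x)
    simp only [toEuclideanLin_conjTranspose_eq_adjoint, LinearMap.adjoint_adjoint] at hx
    linarith
  · have hy := abs_le.1 (abs_sum_norm_sq_adjoint_sub_norm_sq_le hε hrow y)
    linarith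

theorem dimNondecreasing_of_frobSq_add_frobSq_lt
    (hB : frobSq (Tcp B 1 - 1) + frobSq (TcpStar B 1 - 1) < (1 / (2 * n + 1) : ℝ) ^ 2) :
    DimNondecreasing B := by
  intro U
  have hrow_nonneg := frobSq_nonneg (Tcp B 1 - 1)
  have hcol_nonneg := frobSq_nonneg (TcpStar B 1 - 1)
  have hle := finrank_mul_one_sub_le_finrank_ASpan_mul_one_add (B := B) (ε := 1 / (2 * n + 1))
    (by positivity) (by linarith) (by linarith) U
  have hdim : (Module.finrank ℂ U : ℝ) ≤ n := by exact_mod_cast (by simpa using U.finrank_le)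
  by_contra! hlt
  have hgap : (Module.finrank ℂ (ASpan B U) : ℝ) + 1 ≤ Module.finrank ℂ U := by exact_mod_cast hlt
  field_simp at hle
  nlinarith

end NearlyDoublyStochastic

/-- `𝒜` is scalable iff `dim 𝒜U ≥ dim U` for every subspace `U ≤ ℂⁿ`. -/
theorem scalable_iff_dim_condition {m n : ℕ} (A : Fin m → Matrix (Fin n) (Fin n) ℂ) :
    (∀ ε > (0 : ℝ), ∃ g h : GL (Fin n) ℂ,
        frobSq (Tcp (fun k => (↑g)ᴴ * A k * (↑h : Matrix (Fin n) (Fin n) ℂ)) 1 - 1)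
          + frobSq (TcpStar (fun k => (↑g)ᴴ * A k * (↑h : Matrix (Fin n) (Fin n) ℂ)) 1 - 1)
          < ε ^ 2)
      ↔ ∀ U : Submodule ℂ (Fin n → ℂ),
          Module.finrank ℂ U ≤ Module.finrank ℂ (ASpan A U) := by
  refine ⟨fun hscalable => ?_, fun hA ε hε => ?_⟩
  · obtain ⟨g, h, hgh⟩ := hscalable (1 / (2 * n + 1)) (by positivity)
    exact (dimNondecreasing_scaledTuple_iff g.isUnit h.isUnit).1
      (dimNondecreasing_of_frobSq_add_frobSq_lt hgh)
  · exact exists_scaling_of_dimNondecreasing hA (pow_pos hε 2)
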